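/- Deterministic GreeDI guarantee: let OPT be any set of k elements distributed among machines with O_j the optimal elements on machine j (r_j = |O_j|, Σ_j r_j = k), and let E_j be the k-element greedy solution on machine j with E = ∪_j E_j. If Õ ⊆ E is a k-element subset of E maximizing f, then f(OPT) ≤ 2√k · f(Õ), for any monotone submodular f. -/

import Mathlib

open MeasureTheory Finset

/-- A set function is submodular. -/
def Submodular {V : Type*} [DecidableEq V] (f : Finset V → ℝ) : Prop :=
  ∀ A B : Finset V, f (A ∪ B) + f (A ∩ B) ≤ f A + f B

/-- The Lovász extension: expectation over a uniform threshold θ ∈ (0,1). -/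
noncomputable def lovasz {V : Type*} [Fintype V] [DecidableEq V]
    (f : Finset V → ℝ) (x : V → ℝ) : ℝ :=
  ∫ θ in Set.Ioo (0:ℝ) 1, f (Finset.univ.filter (fun i => θ ≤ x i))

/-- Characteristic vector of a finite set. -/
def charVec {V : Type*} [DecidableEq V] (S : Finset V) : V → ℝ :=
  fun i => if i ∈ S then 1 else 0
/-- One pass of the standard greedy algorithm with fuel `n`: at each step add the
feasible element of `X` with maximum nonnegative marginal gain, breaking ties by
the fixed linear order on `V` (choosing the least maximizer). -/
noncomputable def greedyAux {V : Type*} [Fintype V] [DecidableEq V] [LinearOrder V]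
    (f : Finset V → ℝ) (I : Finset V → Prop) [DecidablePred I]
    (X : Finset V) : ℕ → Finset V → Finset V
  | 0, S => S
  | (n+1), S =>
    let C := (X \ S).filter (fun e => I (insert e S) ∧ 0 ≤ f (insert e S) - f S)
    let M := C.filter (fun e => ∀ e' ∈ C, f (insert e' S) - f S ≤ f (insert e S) - f S)
    if h : M.Nonempty then greedyAux f I X n (insert (M.min' h) S) else S

/-- The standard greedy algorithm on ground set `X`. -/
noncomputable def greedy {V : Type*} [Fintype V] [DecidableEq V] [LinearOrder V]
    (f : Finset V → ℝ) (I : Finset V → Prop) [DecidablePred I]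
    (X : Finset V) : Finset V :=
  greedyAux f I X (Fintype.card V) ∅

/-!
Work with the increments `f A - f ∅`, let `c` bound `f` on the sets of at most `k` elements output
by the machines, and let `r = |OPT|`. At most `r` machines are needed to cover `OPT`. Let `T`
collect the first `n` greedy picks of each of these machines. It has at most `n * r` elements, so
it splits into `n` sets of at most `r` elements and `f T - f ∅ ≤ n * (c - f ∅)`. On the other hand,
an element of `OPT` was available to its machine in each of the first `n + 1` greedy steps, and by
submodularity each of these steps gained at least what the element would still add to `T`; the
latter is therefore at most `(c - f ∅) / (n + 1)`. Adding all of `OPT` to `T` gives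
`f OPT - f ∅ ≤ (n + r / (n + 1)) * (c - f ∅)`, and `n + 1 = ⌈√r⌉` balances the two terms.
-/

namespace Submodular

variable {V : Type*} [DecidableEq V] {f : Finset V → ℝ} {A B : Finset V}

theorem insert_sub_le_insert_sub (hsub : Submodular f) (hmono : Monotone f) (hAB : A ⊆ B) (o : V) :
    f (insert o B) - f B ≤ f (insert o A) - f A := by
  have hunion : insert o A ∪ B = insert o B := by
    rw [insert_union, union_eq_right.2 hAB]
  have hinter : f A ≤ f (insert o A ∩ B) := hmono (subset_inter (subset_insert o A) hAB)
  have := hsub (insert o A) B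
  rw [hunion] at this
  linarith

theorem union_sub_le_sum_insert_sub (hsub : Submodular f) (hmono : Monotone f)
    (A B : Finset V) : f (A ∪ B) - f A ≤ ∑ o ∈ B, (f (insert o A) - f A) := by
  induction B using Finset.induction_on with
  | empty => simp
  | insert o B ho ih =>
    have := hsub.insert_sub_le_insert_sub hmono (subset_union_left (s₁ := A) (s₂ := B)) o
    rw [union_insert, sum_insert ho]
    linarith

theorem union_sub_empty_le_add (hsub : Submodular f) (hAB : Disjoint A B) :
    f (A ∪ B) - f ∅ ≤ (f A - f ∅) + (f B - f ∅) := by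
  have := hsub A B
  rw [disjoint_iff_inter_eq_empty.1 hAB] at this
  linarith

theorem sub_empty_le_mul_of_card_le_mul (hsub : Submodular f) {G : Finset V} {r : ℕ} {c : ℝ}
    (hc : ∀ A ⊆ G, #A ≤ r → f A ≤ c) {n : ℕ} (hAG : A ⊆ G) (hA : #A ≤ n * r) :
    f A - f ∅ ≤ n * (c - f ∅) := by
  induction n generalizing A with
  | zero =>
    obtain rfl : A = ∅ := by simpa using hA
    simp
  | succ n ih =>
    obtain ⟨B, hBA, hB⟩ := exists_subset_card_eq (min_le_right r #A)
    have hdiff : #(A \ B) ≤ n * r := by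
      rw [Nat.succ_mul] at hA
      rw [card_sdiff_of_subset hBA, hB]
      omega
    have hfB : f B ≤ c := hc B (hBA.trans hAG) (hB.trans_le (min_le_left _ _))
    have hfdiff := ih (sdiff_subset.trans hAG) hdiff
    have hsplit := hsub.union_sub_empty_le_add (disjoint_sdiff (s := B) (t := A))
    rw [union_sdiff_of_subset hBA] at hsplit
    push_cast
    linarith

end Submodular

section Greedy

variable {V : Type*} [Fintype V] [DecidableEq V] [LinearOrder V] (f : Finset V → ℝ)
  (I : Finset V → Prop) [DecidablePred I] (X : Finset V)

theorem greedyAux_add (m n : ℕ) (S : Finset V) :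
    greedyAux f I X (m + n) S = greedyAux f I X n (greedyAux f I X m S) := by
  induction m generalizing S with
  | zero => rw [Nat.zero_add, greedyAux]
  | succ m ih =>
    rw [Nat.succ_add, greedyAux, greedyAux]
    split_ifs with h
    · exact ih _
    · cases n with
      | zero => rw [greedyAux]
      | succ n => rw [greedyAux, dif_neg h]

theorem subset_greedyAux (n : ℕ) (S : Finset V) : S ⊆ greedyAux f I X n S := by
  induction n generalizing S with
  | zero => rw [greedyAux]
  | succ n ih =>
    rw [greedyAux]
    split_ifs
    · exact (subset_insert _ S).trans (ih _)
    · exact Subset.rfl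

theorem greedyAux_mono (S : Finset V) : Monotone fun n => greedyAux f I X n S := by
  refine monotone_nat_of_le_succ fun n => ?_
  rw [greedyAux_add]
  exact subset_greedyAux f I X 1 _

theorem card_greedyAux_le (n : ℕ) (S : Finset V) : #(greedyAux f I X n S) ≤ #S + n := by
  induction n generalizing S with
  | zero => rw [greedyAux, Nat.add_zero]
  | succ n ih =>
    rw [greedyAux]
    split_ifs with h
    · have := card_insert_le (Finset.min' _ h) S
      have := ih (insert (Finset.min' _ h) S)
      omega
    · omega

variable {f I X}

theorem apply_insert_le_apply_greedyAux_one {S : Finset V} {o : V} (ho : o ∈ X)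
    (hI : I (insert o S)) : f (insert o S) ≤ f (greedyAux f I X 1 S) := by
  set C := (X \ S).filter (fun e => I (insert e S) ∧ 0 ≤ f (insert e S) - f S) with hC
  have hcandidate : f S < f (insert o S) → o ∈ C := fun hlt => by
    have hoS : o ∉ S := fun hoS => by simp [insert_eq_of_mem hoS] at hlt
    exact mem_filter.2 ⟨mem_sdiff.2 ⟨ho, hoS⟩, hI, sub_nonneg.2 hlt.le⟩
  simp only [greedyAux]
  rw [← hC]
  split_ifs with h
  · obtain ⟨hmC, hmax⟩ := mem_filter.1 (min'_mem _ h)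
    rcases le_or_gt (f (insert o S)) (f S) with hle | hlt
    · exact hle.trans (sub_nonneg.1 (mem_filter.1 hmC).2.2)
    · exact (sub_le_sub_iff_right _).1 (hmax o (hcandidate hlt))
  · refine le_of_not_gt fun hlt => h ?_
    obtain ⟨m, hmC, hmax⟩ :=
      exists_max_image C (fun e => f (insert e S) - f S) ⟨o, hcandidate hlt⟩
    exact ⟨m, mem_filter.2 ⟨hmC, hmax⟩⟩

theorem mul_insert_sub_le_greedyAux_sub (hsub : Submodular f) (hmono : Monotone f) {S : Finset V}
    {o : V} (ho : o ∈ X) {n : ℕ} (hI : ∀ i ≤ n, I (insert o (greedyAux f I X i S))) {B : Finset V}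
    (hB : greedyAux f I X n S ⊆ B) :
    (n + 1) * (f (insert o B) - f B) ≤ f (greedyAux f I X (n + 1) S) - f S := by
  let E (i : ℕ) := greedyAux f I X i S
  have hstep (i : ℕ) (hi : i ≤ n) : f (insert o B) - f B ≤ f (E (i + 1)) - f (E i) :=
    calc f (insert o B) - f B
      _ ≤ f (insert o (E i)) - f (E i) :=
        hsub.insert_sub_le_insert_sub hmono
          ((greedyAux_mono f I X S hi).trans hB) o
      _ ≤ f (E (i + 1)) - f (E i) := by
        simp only [E, greedyAux_add]
        exact sub_le_sub_right (apply_insert_le_apply_greedyAux_one ho (hI i hi)) _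
  calc (n + 1) * (f (insert o B) - f B)
    _ = ∑ _i ∈ range (n + 1), (f (insert o B) - f B) := by
      rw [sum_const, card_range, nsmul_eq_mul, Nat.cast_succ]
    _ ≤ ∑ i ∈ range (n + 1), (f (E (i + 1)) - f (E i)) :=
      sum_le_sum fun i hi => hstep i (mem_range_succ_iff.1 hi)
    _ = f (E (n + 1)) - f S := sum_range_sub (fun i => f (E i)) (n + 1)

end Greedy

theorem exists_subset_card_le_subset_biUnion {ι V : Type*} [DecidableEq V] {M : Finset ι}
    {N : ι → Finset V} {A : Finset V} (hA : A ⊆ M.biUnion N) :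
    ∃ L ⊆ M, #L ≤ #A ∧ A ⊆ L.biUnion N := by
  classical
  choose J hJM hJN using fun o : A => mem_biUnion.1 (hA o.2)
  refine ⟨univ.image J, ?_, card_image_le.trans_eq (by simp), fun o ho => ?_⟩
  · simpa [image_subset_iff] using hJM
  · exact mem_biUnion.2 ⟨J ⟨o, ho⟩, mem_image_of_mem J (mem_univ _), hJN ⟨o, ho⟩⟩

theorem exists_lt_add_div_le_two_mul_sqrt {r : ℕ} (hr : 0 < r) :
    ∃ n < r, (n + r / (n + 1) : ℝ) ≤ 2 * √r := by
  have hceil : 0 < ⌈√(r : ℝ)⌉₊ := Nat.ceil_pos.2 (Real.sqrt_pos.2 (Nat.cast_pos.2 hr))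
  obtain ⟨n, hn⟩ := Nat.exists_eq_succ_of_ne_zero hceil.ne'
  have hnsqrt : (n : ℝ) < √r := Nat.lt_ceil.1 (by omega)
  have hsqrtn : √r ≤ (n + 1 : ℝ) := by exact_mod_cast Nat.ceil_le.1 hn.le
  refine ⟨n, ?_, ?_⟩
  · have hsqrt : √(r : ℝ) ≤ r := Real.sqrt_le_self_iff.2 (.inr (by exact_mod_cast hr))
    exact_mod_cast hnsqrt.trans_le hsqrt
  · have hdiv : r / (n + 1 : ℝ) ≤ √r := by
      rw [div_le_iff₀ (by positivity)]
      nth_rewrite 1 [← Real.mul_self_sqrt (Nat.cast_nonneg r)]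
      gcongr
    linarith

section GreeDI

variable {V ι : Type*} [Fintype V] [DecidableEq V] [LinearOrder V] {f : Finset V → ℝ}
  {k : ℕ} {M : Finset ι} {N : ι → Finset V} {OPT : Finset V} {c : ℝ}

theorem greedi_sub_empty_le_of_lt_card (hsub : Submodular f) (hmono : Monotone f)
    (hOPT : OPT ⊆ M.biUnion N) (hcard : #OPT ≤ k)
    (hc : ∀ A ⊆ M.biUnion fun j => greedy f (fun s => #s ≤ k) (N j), #A ≤ k → f A ≤ c)
    {n : ℕ} (hn : n < #OPT) :
    f OPT - f ∅ ≤ (n + #OPT / (n + 1)) * (c - f ∅) := by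
  obtain ⟨L, hLM, hLcard, hOPTL⟩ := exists_subset_card_le_subset_biUnion hOPT
  let E (j : ι) (i : ℕ) := greedyAux f (fun s => #s ≤ k) (N j) i ∅
  have hEcard (j : ι) (i : ℕ) : #(E j i) ≤ i := by simpa using card_greedyAux_le f _ (N j) i ∅
  have hEsub (j : ι) (hj : j ∈ L) (i : ℕ) (hi : i ≤ #OPT) :
      E j i ⊆ M.biUnion fun j => greedy f (fun s => #s ≤ k) (N j) :=
    (greedyAux_mono f _ (N j) ∅ (hi.trans (card_le_univ OPT))).trans
      (subset_biUnion_of_mem (fun j => greedy f (fun s => #s ≤ k) (N j)) (hLM hj))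
  let T := L.biUnion fun j => E j n
  have hTcard : #T ≤ n * #OPT :=
    calc #T ≤ #L * n := card_biUnion_le_card_mul L _ n fun j _ => hEcard j n
      _ ≤ n * #OPT := by rw [mul_comm]; gcongr
  have hT : f T - f ∅ ≤ n * (c - f ∅) :=
    hsub.sub_empty_le_mul_of_card_le_mul (fun A hA hAcard => hc A hA (hAcard.trans hcard))
      (biUnion_subset.2 fun j hj => hEsub j hj n hn.le) hTcard
  have hgain (o : V) (ho : o ∈ OPT) : f (insert o T) - f T ≤ (c - f ∅) / (n + 1) := by
    obtain ⟨j, hj, hoj⟩ := mem_biUnion.1 (hOPTL ho)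
    have hfeasible (i : ℕ) (hi : i ≤ n) : #(insert o (E j i)) ≤ k := by
      have := card_insert_le o (E j i)
      have := hEcard j i
      omega
    have hgreedy := mul_insert_sub_le_greedyAux_sub hsub hmono hoj hfeasible
      (subset_biUnion_of_mem (fun j => E j n) hj)
    have hE : f (E j (n + 1)) ≤ c := hc _ (hEsub j hj _ hn) ((hEcard j _).trans (by omega))
    rw [le_div_iff₀' (by positivity)]
    exact hgreedy.trans (sub_le_sub_right hE _)
  calc f OPT - f ∅
    _ ≤ f (T ∪ OPT) - f ∅ := sub_le_sub_right (hmono subset_union_right) _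
    _ = (f T - f ∅) + (f (T ∪ OPT) - f T) := by ring
    _ ≤ n * (c - f ∅) + ∑ o ∈ OPT, (f (insert o T) - f T) :=
      add_le_add hT (hsub.union_sub_le_sum_insert_sub hmono T OPT)
    _ ≤ n * (c - f ∅) + #OPT * ((c - f ∅) / (n + 1)) := by
      rw [← nsmul_eq_mul #OPT]
      gcongr
      exact sum_le_card_nsmul OPT _ _ hgain
    _ = (n + #OPT / (n + 1)) * (c - f ∅) := by ring

theorem det_greedi_guarantee_general (hsub : Submodular f) (hmono : Monotone f)
    (hOPT : OPT ⊆ M.biUnion N) (hcard : #OPT ≤ k)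
    (hc : ∀ A ⊆ M.biUnion fun j => greedy f (fun s => #s ≤ k) (N j), #A ≤ k → f A ≤ c) :
    f OPT - f ∅ ≤ 2 * √(#OPT) * (c - f ∅) := by
  rcases OPT.eq_empty_or_nonempty with rfl | hne
  · simp
  obtain ⟨n, hn, hbalance⟩ := exists_lt_add_div_le_two_mul_sqrt hne.card_pos
  have hc_nonneg : 0 ≤ c - f ∅ := sub_nonneg.2 (hc ∅ (empty_subset _) (by simp))
  exact (greedi_sub_empty_le_of_lt_card hsub hmono hOPT hcard hc hn).trans
    (mul_le_mul_of_nonneg_right hbalance hc_nonneg)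

end GreeDI

/-- Theorem 8: the deterministic GreeDI guarantee, `f(OPT) ≤ 2√k · f(Õ)`. -/
theorem det_greedi_guarantee {V : Type*} [Fintype V] [DecidableEq V] [LinearOrder V]
    (f : Finset V → ℝ) (hsub : Submodular f)
    (hmono : ∀ A B : Finset V, A ⊆ B → f A ≤ f B) (hnn : ∀ A : Finset V, 0 ≤ f A)
    (k : ℕ) (hk : 0 < k) (t : ℕ)
    (N O : Fin t → Finset V) (hNO : ∀ j, O j ⊆ N j)
    (hdisj : ∀ j j' : Fin t, j ≠ j' → Disjoint (O j) (O j'))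
    (OPT : Finset V) (hOPT : OPT = Finset.univ.biUnion O) (hcard : OPT.card = k)
    (Otil : Finset V)
    (hOtil : Otil ⊆
      Finset.univ.biUnion (fun j : Fin t => greedy f (fun s : Finset V => s.card ≤ k) (N j)))
    (hOtilcard : Otil.card ≤ k)
    (hOtilmax : ∀ A : Finset V,
      A ⊆ Finset.univ.biUnion
            (fun j : Fin t => greedy f (fun s : Finset V => s.card ≤ k) (N j)) →
      A.card ≤ k → f A ≤ f Otil) :
    f OPT ≤ 2 * Real.sqrt k * f Otil := by
  have hbound : f OPT - f ∅ ≤ 2 * √k * (f Otil - f ∅) :=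
    hcard ▸ det_greedi_guarantee_general hsub (fun A B => hmono A B)
      (hOPT.trans_subset (biUnion_mono fun j _ => hNO j)) hcard.le hOtilmax
  have hsqrt : 1 ≤ 2 * √(k : ℝ) := by linarith [Real.one_le_sqrt.2 (Nat.one_le_cast.2 hk)]
  linarith [le_mul_of_one_le_left (hnn ∅) hsqrt]
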